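/- arXiv:2403.00233 — 8 statements merged into one kernel-verified Lean document; each statement's English description precedes it below -/
import Mathlib

section
/- Let T ≥ 1 be a natural number, let C ≥ 0 and β ≥ 0 be real numbers, and let m be a natural number. Let Δ₁, …, Δ_T be real numbers with 0 ≤ Δ_t ≤ C for all t ∈ {1,…,T}. Assume that for every real ε ≥ 1/T, the number of indices t ∈ {1,…,T} with Δ_t > ε is at most (4β/ε² + 1)·m. Then ∑_{t=1}^T Δ_t ≤ 1 + min(m, T)·C + 4·√(m·β·T). -/
/-!
Sort the errors in descending order, `f 0 ≥ f 1 ≥ …`. The first `m` sorted terms are at most `C`.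
For a sorted term with zero-based index `m + k`, the counting bound at any level `ε < f (m + k)`
with `1 / T ≤ ε` gives `m + k + 1 ≤ (4 β / ε² + 1) m`, that is `ε ≤ 2 √(m β) / √(k + 1)`; hence
`f (m + k) ≤ 1 / T + 2 √(m β) / √(k + 1)` (`sorted_term_le`). Summing, the terms `1 / T` contribute
`1` in total, and `∑_{k < n} 1 / √(k + 1) ≤ 2 √n` bounds the rest (`sum_envelope_le`).
-/

lemma inv_sqrt_succ_le (k : ℕ) :
    1 / Real.sqrt (k + 1) ≤ 2 * (Real.sqrt (k + 1) - Real.sqrt k) := by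
  have ha : 0 < Real.sqrt ((k : ℝ) + 1) := Real.sqrt_pos.2 (by positivity)
  have h1 := Real.sq_sqrt (show (0 : ℝ) ≤ (k : ℝ) + 1 by positivity)
  have h2 := Real.sq_sqrt (show (0 : ℝ) ≤ (k : ℝ) by positivity)
  rw [div_le_iff₀ ha]
  nlinarith [sq_nonneg (Real.sqrt ((k : ℝ) + 1) - Real.sqrt k)]

/-- The sum of the envelope of the sorted errors: `C` for each of the first `m` indices and
`2 s / √(k + 1)` at index `m + k`. The subtractions of natural numbers are truncated. -/
lemma sum_envelope_le (C s : ℝ) (hs : 0 ≤ s) (m N : ℕ) :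
    ∑ i ∈ Finset.range N, (if i < m then C else 2 * s / Real.sqrt (((i - m : ℕ) : ℝ) + 1))
      ≤ ((min m N : ℕ) : ℝ) * C + 4 * s * Real.sqrt ((N - m : ℕ) : ℝ) := by
  induction N with
  | zero => simp
  | succ N ih =>
    rw [Finset.sum_range_succ]
    by_cases h : N < m
    · have e1 : min m N = N := by omega
      have e2 : min m (N + 1) = N + 1 := by omega
      have e3 : N - m = 0 := by omega
      have e4 : N + 1 - m = 0 := by omega
      rw [e1, e3] at ih
      rw [e2, e4, if_pos h]
      push_cast at ih ⊢
      linarith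
    · have e1 : min m N = m := by omega
      have e2 : min m (N + 1) = m := by omega
      have e4 : N + 1 - m = (N - m) + 1 := by omega
      rw [e1] at ih
      rw [e2, e4, if_neg h]
      push_cast
      have hk := mul_le_mul_of_nonneg_left (inv_sqrt_succ_le (N - m)) (by positivity : 0 ≤ 2 * s)
      rw [mul_one_div] at hk
      linarith

/-- The pointwise bound on a sorted error past the first `m`, from the counting bound at level
`ε = 1 / T + 2 √(m β) / √(k + 1)`. -/
lemma sorted_term_le (T : ℕ) (hT : 1 ≤ T) (β : ℝ) (hβ : 0 ≤ β)
    (m : ℕ) (f : Fin T → ℝ) (hf : Antitone f)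
    (hcount : ∀ ε : ℝ, (1 : ℝ) / T ≤ ε →
      ((Finset.univ.filter (fun t => ε < f t)).card : ℝ) ≤ (4 * β / ε ^ 2 + 1) * m)
    (i : Fin T) (k : ℕ) (hi : (i : ℕ) = m + k) :
    f i ≤ 1 / T + 2 * Real.sqrt (m * β) / Real.sqrt ((k : ℝ) + 1) := by
  by_contra! h
  have hT' : (0 : ℝ) < 1 / T := by positivity
  have hr : 0 < Real.sqrt ((k : ℝ) + 1) := Real.sqrt_pos.2 (by positivity)
  have hs : 0 ≤ Real.sqrt (m * β) := Real.sqrt_nonneg _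
  have hr2 := Real.sq_sqrt (show (0 : ℝ) ≤ (k : ℝ) + 1 by positivity)
  have hs2 := Real.sq_sqrt (show (0 : ℝ) ≤ m * β by positivity)
  set r := Real.sqrt ((k : ℝ) + 1)
  set s := Real.sqrt (m * β)
  set ε : ℝ := 1 / T + 2 * s / r with hε
  have hq : 0 ≤ 2 * s / r := by positivity
  have hεpos : 0 < ε := by positivity
  have hc := hcount ε (by linarith)
  have hsub : Finset.Iic i ⊆ Finset.univ.filter (fun t => ε < f t) := by
    intro t ht
    simp only [Finset.mem_filter, Finset.mem_univ, true_and]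
    exact h.trans_le (hf (Finset.mem_Iic.1 ht))
  have hcard : ((m + k + 1 : ℕ) : ℝ) ≤ (Finset.univ.filter (fun t => ε < f t)).card := by
    have := Finset.card_le_card hsub
    rw [Fin.card_Iic, hi] at this
    exact_mod_cast this
  push_cast at hcard
  have h1 : (k : ℝ) + 1 ≤ 4 * s ^ 2 / ε ^ 2 := by
    have e : (4 * β / ε ^ 2 + 1) * m = 4 * s ^ 2 / ε ^ 2 + m := by rw [hs2]; ring
    linarith
  rw [le_div_iff₀ (by positivity), ← hr2] at h1
  have h2 : 2 * s < ε * r := by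
    rw [← div_lt_iff₀ hr]
    linarith
  nlinarith

/-- Deterministic core of the cumulative error bound: a counting bound on the
per-round errors `Δ t` (with `m` the eluder dimension and `β` the confidence
radius) yields a bound on their cumulative sum. -/
theorem stmt0 (T : ℕ) (hT : 1 ≤ T) (C β : ℝ) (hC : 0 ≤ C) (hβ : 0 ≤ β)
    (m : ℕ) (Δ : Fin T → ℝ)
    (hΔ : ∀ t, 0 ≤ Δ t ∧ Δ t ≤ C)
    (hcount : ∀ ε : ℝ, (1 : ℝ) / T ≤ ε →
      ((Finset.univ.filter (fun t => ε < Δ t)).card : ℝ) ≤ (4 * β / ε ^ 2 + 1) * m) :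
    ∑ t, Δ t ≤ 1 + ((min m T : ℕ) : ℝ) * C + 4 * Real.sqrt (m * β * T) := by
  have hT' : (0 : ℝ) < T := by exact_mod_cast hT
  -- `Tuple.sort` sorts in ascending order, so it is applied to `-Δ`.
  set σ := Tuple.sort (fun t => -Δ t)
  have hanti : Antitone (Δ ∘ σ) := fun a b hab =>
    neg_le_neg_iff.1 (Tuple.monotone_sort (fun t => -Δ t) hab)
  have hcount' : ∀ ε : ℝ, (1 : ℝ) / T ≤ ε →
      ((Finset.univ.filter (fun t => ε < (Δ ∘ σ) t)).card : ℝ) ≤ (4 * β / ε ^ 2 + 1) * m := by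
    intro ε hε
    refine le_trans ?_ (hcount ε hε)
    rw [Nat.cast_le]
    refine Finset.card_le_card_of_injOn σ ?_ σ.injective.injOn
    intro t ht
    simpa using ht
  have hterm : ∀ i : Fin T, Δ (σ i) ≤ 1 / T +
      (if (i : ℕ) < m then C
        else 2 * Real.sqrt (m * β) / Real.sqrt ((((i : ℕ) - m : ℕ) : ℝ) + 1)) := by
    intro i
    split_ifs with h
    · have : (0 : ℝ) < 1 / T := by positivity
      linarith [(hΔ (σ i)).2]
    · exact sorted_term_le T hT β hβ m (Δ ∘ σ) hanti hcount' i (i - m) (by omega)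
  have hsum : ∑ t, Δ t ≤ 1 + ∑ i ∈ Finset.range T, (if i < m then C
        else 2 * Real.sqrt (m * β) / Real.sqrt (((i - m : ℕ) : ℝ) + 1)) := by
    rw [← Equiv.sum_comp σ Δ]
    refine (Finset.sum_le_sum fun i _ => hterm i).trans ?_
    rw [Finset.sum_add_distrib, Finset.sum_range]
    simp [hT'.ne']
  have henv := sum_envelope_le C (Real.sqrt (m * β)) (Real.sqrt_nonneg _) m T
  have hsqrt : Real.sqrt ((T - m : ℕ) : ℝ) ≤ Real.sqrt T :=
    Real.sqrt_le_sqrt (by exact_mod_cast Nat.sub_le T m)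
  have hmul := mul_le_mul_of_nonneg_left hsqrt
    (by positivity : 0 ≤ 4 * Real.sqrt (m * β))
  rw [Real.sqrt_mul (by positivity : (0 : ℝ) ≤ m * β)]
  linarith
end

section
/- Let d ≥ 1 and n ≥ 0 be integers, let λ > 0, and let x₁, …, xₙ ∈ ℝ^d. For s ∈ {1,…,n+1} define the d×d matrix V_s = λ·I + ∑_{m=1}^{s−1} x_m x_mᵀ. If for every s ∈ {1,…,n} one has x_sᵀ V_s⁻¹ x_s ≥ 1/2, then det(V_{n+1}) ≥ λ^d · (3/2)^n. -/
/-!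
Since `V (k + 1) = V k + x_k x_kᵀ`, the matrix determinant lemma multiplies the determinant
by `1 + x_kᵀ (V k)⁻¹ x_k ≥ 3/2` at each step, starting from `det (V 0) = λ ^ d`.
-/

open Matrix

/-- The matrix determinant lemma for a rank-one update, with the scalar factor written
as a dot product. -/
lemma det_add_vecMulVec_of_isUnit {d : ℕ} {A : Matrix (Fin d) (Fin d) ℝ}
    (hA : IsUnit A.det) (u v : Fin d → ℝ) :
    (A + vecMulVec u v).det = A.det * (1 + v ⬝ᵥ A⁻¹ *ᵥ u) := by
  have h : A + vecMulVec u v =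
      A * (1 + replicateCol Unit (A⁻¹ *ᵥ u) * replicateRow Unit v) := by
    rw [← vecMulVec_eq, mul_add, mul_one, mul_vecMulVec, mulVec_mulVec,
      mul_nonsing_inv A hA, one_mulVec]
  rw [h, det_mul, det_one_add_replicateCol_mul_replicateRow]

/-- Determinant lower-bound step in the eluder-dimension analysis for linear SCMs:
if `V s = λ·I + ∑_{m<s} x_m x_mᵀ` and `x_sᵀ (V s)⁻¹ x_s ≥ 1/2` for all `s < n`,
then `det (V n) ≥ λ^d (3/2)^n`. (Here indices are 0-based: the vector `x s`
corresponds to the paper's `x_{s+1}`, and `V n` is the paper's `V_{n+1}`.) -/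
theorem stmt2 (d n : ℕ) (hd : 1 ≤ d) (lam : ℝ) (hlam : 0 < lam)
    (x : ℕ → Fin d → ℝ)
    (V : ℕ → Matrix (Fin d) (Fin d) ℝ)
    (hVdef : ∀ s, V s = lam • (1 : Matrix (Fin d) (Fin d) ℝ) +
        ∑ m ∈ Finset.range s, Matrix.vecMulVec (x m) (x m))
    (hquad : ∀ s < n, (1 : ℝ) / 2 ≤ x s ⬝ᵥ ((V s)⁻¹).mulVec (x s)) :
    lam ^ d * ((3 : ℝ) / 2) ^ n ≤ (V n).det := by
  -- The bound itself makes `det (V k)` positive, so the induction needs no separate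
  -- argument that `V k` is invertible.
  have key : ∀ k ≤ n, lam ^ d * ((3 : ℝ) / 2) ^ k ≤ (V k).det := by
    intro k
    induction k with
    | zero =>
      intro _
      simp [hVdef 0]
    | succ k ih =>
      intro hk
      have hlow := ih (Nat.le_of_succ_le hk)
      have hpos : 0 < (V k).det := lt_of_lt_of_le (by positivity) hlow
      have hstep : V (k + 1) = V k + vecMulVec (x k) (x k) := by
        rw [hVdef (k + 1), hVdef k, Finset.sum_range_succ, add_assoc]
      rw [hstep, det_add_vecMulVec_of_isUnit hpos.ne'.isUnit, pow_succ, ← mul_assoc]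
      have hfactor : (3 : ℝ) / 2 ≤ 1 + x k ⬝ᵥ (V k)⁻¹ *ᵥ x k := by
        linarith [hquad k hk]
      exact mul_le_mul hlow hfactor (by norm_num) hpos.le
  exact key n le_rfl
end

section
/- Let d ≥ 1 and n ≥ 0 be integers, let λ > 0 and c ≥ 0, and let x₁, …, xₙ ∈ ℝ^d satisfy ‖x_s‖² ≤ c for every s ∈ {1,…,n}. Then det(λ·I + ∑_{s=1}^{n} x_s x_sᵀ) ≤ ((n·c)/d + λ)^d. -/
/-!
The matrix `λ I + ∑ x_s x_sᵀ` is positive semidefinite with trace `λ d + ∑ ‖x_s‖² ≤ λ d + n c`.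
AM–GM on its eigenvalues (`det_le_trace_div_pow`) bounds the determinant by `(trace / d) ^ d`.
-/

open Matrix

/-- AM–GM for the eigenvalues of a positive semidefinite matrix: `det A ≤ (tr A / d) ^ d`. -/
lemma det_le_trace_div_pow (d : ℕ) (hd : 1 ≤ d) (A : Matrix (Fin d) (Fin d) ℝ)
    (hA : A.PosSemidef) : A.det ≤ (A.trace / d) ^ d := by
  have hd0 : (0 : ℝ) < d := by exact_mod_cast hd
  have hev : ∀ i, 0 ≤ hA.isHermitian.eigenvalues i := hA.eigenvalues_nonneg
  have hdet : A.det = ∏ i, hA.isHermitian.eigenvalues i := by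
    simpa using hA.isHermitian.det_eq_prod_eigenvalues
  have htr : A.trace = ∑ i, hA.isHermitian.eigenvalues i := by
    simpa using hA.isHermitian.trace_eq_sum_eigenvalues
  have hp : 0 ≤ ∏ i, hA.isHermitian.eigenvalues i := Finset.prod_nonneg fun i _ => hev i
  have key := Real.geom_mean_le_arith_mean Finset.univ (fun _ => (1 : ℝ))
    hA.isHermitian.eigenvalues (fun _ _ => zero_le_one) (by simp; omega) (fun i _ => hev i)
  simp only [Real.rpow_one, one_mul, Finset.sum_const, Finset.card_univ, Fintype.card_fin,
    nsmul_eq_mul, mul_one] at key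
  rw [hdet, htr, ← Real.rpow_inv_natCast_pow hp (by omega : d ≠ 0)]
  exact pow_le_pow_left₀ (Real.rpow_nonneg hp _) key d

/-- Determinant upper-bound step in the eluder-dimension analysis for linear SCMs:
if `‖x_s‖² ≤ c` for all `s < n`, then
`det(λ·I + ∑_{s<n} x_s x_sᵀ) ≤ ((n·c)/d + λ)^d`. -/
theorem stmt3 (d n : ℕ) (hd : 1 ≤ d) (lam c : ℝ) (hlam : 0 < lam) (hc : 0 ≤ c)
    (x : ℕ → Fin d → ℝ) (hx : ∀ s < n, ∑ i, (x s i) ^ 2 ≤ c) :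
    (lam • (1 : Matrix (Fin d) (Fin d) ℝ) +
        ∑ s ∈ Finset.range n, Matrix.vecMulVec (x s) (x s)).det
      ≤ ((n * c) / d + lam) ^ d := by
  have hd0 : (0 : ℝ) < d := by exact_mod_cast hd
  have hV : (lam • (1 : Matrix (Fin d) (Fin d) ℝ) +
      ∑ s ∈ Finset.range n, Matrix.vecMulVec (x s) (x s)).PosSemidef := by
    refine (PosSemidef.one.smul hlam.le).add (posSemidef_sum _ fun s _ => ?_)
    simpa using posSemidef_vecMulVec_self_star (x s)
  refine (det_le_trace_div_pow d hd _ hV).trans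
    (pow_le_pow_left₀ (div_nonneg hV.trace_nonneg hd0.le) ?_ d)
  have hsum : ∑ s ∈ Finset.range n, ∑ i, (x s i) ^ 2 ≤ n * c := by
    simpa using Finset.sum_le_card_nsmul (Finset.range n) _ c
      fun s hs => hx s (Finset.mem_range.mp hs)
  have htr : (lam • (1 : Matrix (Fin d) (Fin d) ℝ) +
      ∑ s ∈ Finset.range n, Matrix.vecMulVec (x s) (x s)).trace
      = lam * d + ∑ s ∈ Finset.range n, ∑ i, (x s i) ^ 2 := by
    simp [trace_add, trace_smul, trace_sum, trace_vecMulVec, dotProduct, pow_two]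
  rw [htr, div_add' _ _ _ hd0.ne']
  refine div_le_div_of_nonneg_right ?_ hd0.le
  linarith
end

section
/- Let x be a real number with 0 < x ≤ 1, let c̄ > 0, and let y ≥ 1 be a real number. If (1+x)^y ≤ c̄·y + 1, then y ≤ ((1+x)/x) · (e/(e−1)) · ( log((1+x)/x) + log(1+c̄) ). -/
/-!
Put `a = (1+x)/x` and `t = y/a`. Taking logarithms in the hypothesis, with
`log (1+x) ≥ 1/a` on the left and `c*y + 1 ≤ (1+c)*y` on the right, gives
`t ≤ log (1+c) + log y = log (1+c) + log a + log t`. The bound `log t ≤ t/e` absorbs the last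
term, leaving `t * (1 - 1/e) ≤ log a + log (1+c)`.
-/

/-- Bound on `B(x) = max{ y ≥ 1 : (1+x)^y ≤ c̄·y + 1 }` from the eluder-dimension
analysis for linear SCMs. -/
theorem stmt4 (x c y : ℝ) (hx0 : 0 < x) (hx1 : x ≤ 1) (hc : 0 < c) (hy : 1 ≤ y)
    (h : (1 + x) ^ y ≤ c * y + 1) :
    y ≤ ((1 + x) / x) * (Real.exp 1 / (Real.exp 1 - 1)) *
        (Real.log ((1 + x) / x) + Real.log (1 + c)) := by
  have hx : 0 < 1 + x := by linarith
  have hy0 : 0 < y := by linarith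
  have hlog : y * Real.log (1 + x) ≤ Real.log (1 + c) + Real.log y := by
    rw [← Real.log_rpow hx, ← Real.log_mul (by positivity) (by positivity)]
    exact Real.log_le_log (Real.rpow_pos_of_pos hx y) (by linarith)
  have hinv : ((1 + x) / x)⁻¹ ≤ Real.log (1 + x) := by
    have h1 := Real.one_sub_inv_le_log_of_pos hx
    have h2 : ((1 + x) / x)⁻¹ = 1 - (1 + x)⁻¹ := by field_simp; ring
    linarith
  have ha : 0 < (1 + x) / x := by positivity
  generalize (1 + x) / x = a at *
  obtain ⟨t, rfl⟩ : ∃ t, y = a * t := ⟨y / a, by field_simp⟩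
  have ht : 0 < t := pos_of_mul_pos_right hy0 ha.le
  have h1 : t ≤ a * t * Real.log (1 + x) := by
    have h2 := mul_le_mul_of_nonneg_left hinv hy0.le
    have h3 : a * t * a⁻¹ = t := by field_simp
    linarith
  rw [Real.log_mul ha.ne' ht.ne'] at hlog
  have he : 1 < Real.exp 1 := Real.one_lt_exp_iff.mpr one_pos
  have hle : Real.log t ≤ t / Real.exp 1 := by
    have h2 := Real.log_le_sub_one_of_pos (div_pos ht (Real.exp_pos 1))
    rw [Real.log_div ht.ne' (Real.exp_pos 1).ne', Real.log_exp] at h2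
    linarith
  rw [mul_assoc]
  refine mul_le_mul_of_nonneg_left ?_ ha.le
  rw [div_mul_eq_mul_div, le_div_iff₀ (by linarith)]
  have h4 : t - t / Real.exp 1 ≤ Real.log a + Real.log (1 + c) := by linarith
  have h5 := mul_le_mul_of_nonneg_left h4 (Real.exp_pos 1).le
  have h6 : Real.exp 1 * (t - t / Real.exp 1) = t * (Real.exp 1 - 1) := by field_simp
  linarith
end

section
/- Let c̄ > 0 and let y ≥ 1 be a real number. If (3/2)^y ≤ c̄·y + 1, then y ≤ 4.8·(1.1 + log(1+c̄)). -/
/-!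
Since `y ≥ 1`, the hypothesis gives `(3/2)^y ≤ (1 + c) * y`, so
`y * log (3/2) ≤ log (1 + c) + log y`. The tangent line of `log` at `6` gives
`log y ≤ y / 6 + log 6 - 1 ≤ y / 6 + 1`, and `log (3/2) ≥ 3/8`. As `3/8 - 1/6 = 5/24 = 1/4.8`,
the bound follows, with constant `1` in place of `1.1`.
-/

/-- Specialization at `x = 1/2` of the bound on
`B(x) = max{ y ≥ 1 : (1+x)^y ≤ c̄·y + 1 }`:
if `(3/2)^y ≤ c̄·y + 1` with `y ≥ 1`, then `y ≤ 4.8·(1.1 + log(1+c̄))`. -/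
theorem stmt5 (c y : ℝ) (hc : 0 < c) (hy : 1 ≤ y)
    (h : ((3 : ℝ) / 2) ^ y ≤ c * y + 1) :
    y ≤ 4.8 * (1.1 + Real.log (1 + c)) := by
  have hy0 : 0 < y := by linarith
  have he1 := Real.exp_one_gt_d9
  have he2 := Real.exp_one_lt_d9
  have hlog : y * Real.log (3 / 2) ≤ Real.log (1 + c) + Real.log y := by
    rw [← Real.log_rpow (by norm_num), ← Real.log_mul (by positivity) (by positivity)]
    exact Real.log_le_log (by positivity) (by linarith)
  have htangent : Real.log y ≤ y / 6 + Real.log 6 - 1 := by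
    have := Real.log_le_sub_one_of_pos (show 0 < y / 6 by positivity)
    rw [Real.log_div (by positivity) (by norm_num)] at this
    linarith
  have hlog6 : Real.log 6 ≤ 2 := by
    rw [Real.log_le_iff_le_exp (by norm_num), show (2 : ℝ) = 1 + 1 by norm_num, Real.exp_add]
    nlinarith
  have hlog32 : 3 / 8 ≤ Real.log (3 / 2) := by
    -- equivalent to `e ^ 3 ≤ (3/2) ^ 8`
    have h8 : (3 : ℝ) ≤ Real.log ((3 / 2) ^ 8) := by
      rw [Real.le_log_iff_exp_le (by positivity), show (3 : ℝ) = (3 : ℕ) * 1 by norm_num,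
        Real.exp_nat_mul]
      calc Real.exp 1 ^ 3 ≤ 2.72 ^ 3 := by gcongr; linarith
        _ ≤ _ := by norm_num
    rw [Real.log_pow] at h8
    push_cast at h8
    linarith
  have := mul_le_mul_of_nonneg_left hlog32 hy0.le
  linarith
end

section
/- For every real number δ with 0 < δ < 1/2, one has (1/2 + δ)·log(1+2δ) + (1/2 − δ)·log(1−2δ) < (1/2)·log( 1 / ((1+2δ)(1−2δ)) ). -/
/-!
With `x = 2 * δ`, the claim says `x * (log (1 + x) - log (1 - x)) < -2 * log (1 - x ^ 2)`.
Both sides are power series in `x ^ 2`: the coefficient of `x ^ (2 * (k + 1))` is `2 / (2 * k + 1)`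
on the left and `2 / (k + 1)` on the right. These satisfy
`2 / (2 * k + 1) ≤ 2 / (k + 1)`, strictly at `k = 1`, so the inequality holds termwise.
-/

/-- The KL divergence `D(Bern(1/2+δ) ‖ Bern(1/2))` is strictly smaller than
`D(Bern(1/2) ‖ Bern(1/2+δ)) = (1/2)·log(1/((1+2δ)(1−2δ)))`, written out
analytically. -/
theorem stmt7 (δ : ℝ) (h1 : 0 < δ) (h2 : δ < 1 / 2) :
    (1 / 2 + δ) * Real.log (1 + 2 * δ) + (1 / 2 - δ) * Real.log (1 - 2 * δ)
      < (1 / 2) * Real.log (1 / ((1 + 2 * δ) * (1 - 2 * δ))) := by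
  obtain ⟨x, rfl⟩ : ∃ x, δ = x / 2 := ⟨2 * δ, by ring⟩
  have hx0 : 0 < x := by linarith
  have hx1 : x < 1 := by linarith
  have hxx : 2 * (x / 2) = x := by ring
  have hp : 1 + x ≠ 0 := by linarith
  have hm : 1 - x ≠ 0 := by linarith
  have hlog : Real.log (1 - x ^ 2) = Real.log (1 + x) + Real.log (1 - x) := by
    rw [← Real.log_mul hp hm]
    ring_nf
  have hL := (Real.hasSum_log_sub_log_of_abs_lt_one
    (abs_lt.mpr ⟨by linarith, hx1⟩)).mul_left x
  have hR := (Real.hasSum_pow_div_log_of_abs_lt_one (x := x ^ 2)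
    (abs_lt.mpr ⟨by nlinarith, by nlinarith⟩)).mul_left 2
  have key : x * (Real.log (1 + x) - Real.log (1 - x)) < 2 * -Real.log (1 - x ^ 2) := by
    have eL (k : ℕ) : x * (2 * (1 / (2 * (k : ℝ) + 1)) * x ^ (2 * k + 1))
        = 2 * (x ^ 2) ^ (k + 1) * (1 / (2 * (k : ℝ) + 1)) := by
      rw [← pow_mul]
      ring
    have eR (k : ℕ) : 2 * ((x ^ 2) ^ (k + 1) / ((k : ℝ) + 1))
        = 2 * (x ^ 2) ^ (k + 1) * (1 / ((k : ℝ) + 1)) := by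
      ring
    -- The coefficients agree at index `0`, so strictness is taken from index `1`.
    refine hasSum_lt (i := 1) (fun k => ?_) ?_ hL hR
    · rw [eL, eR]
      have hk : (0 : ℝ) ≤ k := k.cast_nonneg
      gcongr
      linarith
    · rw [eL, eR]
      gcongr
      norm_num
  rw [hxx, one_div ((1 + x) * (1 - x)), Real.log_inv, Real.log_mul hp hm]
  rw [hlog] at key
  linarith
end

section
/- Let X be a nonempty set, let A ⊆ ℝ with 0 ∈ A, and let R be a set of bounded functions from X to ℝ. Define the induced class F = { f_r : r ∈ R } of functions on X × A by f_r(x, 0) = r(x) and f_r(x, a) = a for a ≠ 0. Then for every α > 0 and every natural number n: R admits an α-cover of cardinality at most n if and only if F admits an α-cover of cardinality at most n. -/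
/-!
The lift `r ↦ f_r` preserves sup-distances: on the slice `a = 0` the difference `f_r - f_{r'}` is
`r - r'`, and off that slice it vanishes. Restriction to the slice `a = 0` inverts the lift. Hence
the image of a cover under the lift (resp. the restriction) is a cover of the other class, and
taking images does not increase cardinality.
-/

/-- Covering-number invariance under the do-intervention lift: the base
observational class `R` of bounded functions on `X` admits an `α`-cover of
cardinality at most `n` iff the induced do-intervention class
`F = { f_r : r ∈ R }` on `X × A` (with `f_r(x,0) = r(x)` and `f_r(x,a) = a`
for `a ≠ 0`) does. -/
theorem stmt12 {X : Type*} [Nonempty X] (A : Set ℝ) (h0 : (0 : ℝ) ∈ A)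
    (R : Set (X → ℝ)) (hbdd : ∀ r ∈ R, ∃ C : ℝ, ∀ x, |r x| ≤ C)
    (F : Set (X × A → ℝ))
    (hF : F = {f | ∃ r ∈ R, f = fun za : X × A =>
        if (za.2 : ℝ) = 0 then r za.1 else (za.2 : ℝ)})
    (α : ℝ) (hα : 0 < α) (n : ℕ) :
    (∃ C : Set (X → ℝ), C ⊆ R ∧ C.Finite ∧ C.ncard ≤ n ∧
        ∀ r ∈ R, ∃ r' ∈ C, ∀ x, |r x - r' x| ≤ α) ↔
    (∃ C : Set (X × A → ℝ), C ⊆ F ∧ C.Finite ∧ C.ncard ≤ n ∧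
        ∀ f ∈ F, ∃ f' ∈ C, ∀ z, |f z - f' z| ≤ α) := by
  subst hF
  constructor
  · rintro ⟨C, hCR, hfin, hcard, hcov⟩
    refine ⟨(fun r (za : X × A) => if (za.2 : ℝ) = 0 then r za.1 else (za.2 : ℝ)) '' C,
      ?_, hfin.image _, (Set.ncard_image_le hfin).trans hcard, ?_⟩
    · rintro _ ⟨r, hr, rfl⟩
      exact ⟨r, hCR hr, rfl⟩
    · rintro _ ⟨r, hr, rfl⟩
      obtain ⟨r', hr', h⟩ := hcov r hr
      refine ⟨_, ⟨r', hr', rfl⟩, fun z => ?_⟩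
      by_cases hz : (z.2 : ℝ) = 0
      · simpa [hz] using h z.1
      · simpa [hz] using hα.le
  · rintro ⟨C, hCF, hfin, hcard, hcov⟩
    refine ⟨(fun f x => f (x, ⟨0, h0⟩)) '' C,
      ?_, hfin.image _, (Set.ncard_image_le hfin).trans hcard, ?_⟩
    · rintro _ ⟨f, hf, rfl⟩
      obtain ⟨r, hr, rfl⟩ := hCF hf
      simpa using hr
    · intro r hr
      obtain ⟨f', hf', h⟩ := hcov _ ⟨r, hr, rfl⟩
      exact ⟨_, ⟨f', hf', rfl⟩, fun x => by simpa using h (x, ⟨0, h0⟩)⟩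
end

section
/- Let X be a nonempty set, let A ⊆ ℝ with 0 ∈ A, and let R be a set of bounded functions from X to ℝ. Define the induced class F = { f_r : r ∈ R } of functions on X × A by f_r(x, 0) = r(x) and f_r(x, a) = a for a ≠ 0. Say that an input z is ε'-independent of inputs z₁, …, z_m with respect to a function class G if there exist g, g̃ ∈ G with ∑_{i=1}^m (g(z_i) − g̃(z_i))² ≤ (ε')² and |g(z) − g̃(z)| > ε'. Then for every ε' > 0 and every natural number n: there exists a sequence z₁, …, zₙ in X × A in which each element is ε'-independent of its predecessors with respect to F if and only if there exists a sequence x₁, …, xₙ in X in which each element is ε'-independent of its predecessors with respect to R. -/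
/-! At an input `(x, a)` with `a ≠ 0` all functions of the induced class take the value `a`, so
such an input is never independent of anything. Hence every independent sequence for the induced
class lives on `X × {0}`, where differences of induced functions are differences of the
corresponding base functions. -/

/-- Eluder-dimension invariance under the do-intervention lift: there exists a
sequence of `n` inputs in `X × A`, each `ε'`-independent of its predecessors
with respect to the induced do-intervention class `F = { f_r : r ∈ R }`
(with `f_r(x,0) = r(x)` and `f_r(x,a) = a` for `a ≠ 0`), iff there exists a
sequence of `n` inputs in `X`, each `ε'`-independent of its predecessors with
respect to the base class `R`. -/
theorem stmt13 {X : Type*} [Nonempty X] (A : Set ℝ) (h0 : (0 : ℝ) ∈ A)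
    (R : Set (X → ℝ)) (hbdd : ∀ r ∈ R, ∃ C : ℝ, ∀ x, |r x| ≤ C)
    (F : Set (X × A → ℝ))
    (hF : F = {f | ∃ r ∈ R, f = fun za : X × A =>
        if (za.2 : ℝ) = 0 then r za.1 else (za.2 : ℝ)})
    (ε : ℝ) (hε : 0 < ε) (n : ℕ) :
    (∃ z : ℕ → X × A, ∀ s < n, ∃ f g, f ∈ F ∧ g ∈ F ∧
        (∑ m ∈ Finset.range s, (f (z m) - g (z m)) ^ 2) ≤ ε ^ 2 ∧
        ε < |f (z s) - g (z s)|) ↔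
    (∃ x : ℕ → X, ∀ s < n, ∃ f g, f ∈ R ∧ g ∈ R ∧
        (∑ m ∈ Finset.range s, (f (x m) - g (x m)) ^ 2) ≤ ε ^ 2 ∧
        ε < |f (x s) - g (x s)|) := by
  subst hF
  constructor
  · rintro ⟨z, hz⟩
    -- All functions of the induced class agree where the action is nonzero, so an
    -- independent input has action `0`.
    have hzero : ∀ s < n, ((z s).2 : ℝ) = 0 := by
      intro s hs
      obtain ⟨f, g, ⟨r, -, rfl⟩, ⟨r', -, rfl⟩, -, hlt⟩ := hz s hs
      by_contra hne
      simp only [if_neg hne, sub_self, abs_zero] at hlt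
      exact lt_asymm hε hlt
    refine ⟨fun m => (z m).1, fun s hs => ?_⟩
    obtain ⟨f, g, ⟨r, hr, rfl⟩, ⟨r', hr', rfl⟩, hsum, hlt⟩ := hz s hs
    refine ⟨r, r', hr, hr', ?_, ?_⟩
    · refine le_of_eq_of_le (Finset.sum_congr rfl fun m hm => ?_) hsum
      simp only [if_pos (hzero m ((Finset.mem_range.mp hm).trans hs))]
    · simpa only [if_pos (hzero s hs)] using hlt
  · rintro ⟨x, hx⟩
    refine ⟨fun m => (x m, ⟨0, h0⟩), fun s hs => ?_⟩
    obtain ⟨r, r', hr, hr', hsum, hlt⟩ := hx s hs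
    refine ⟨_, _, ⟨r, hr, rfl⟩, ⟨r', hr', rfl⟩, ?_, ?_⟩
    · simpa using hsum
    · simpa using hlt
end
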